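/- arXiv:2308.10914 — 3 statements merged into one kernel-verified Lean document; each statement's English description precedes it below -/
import Mathlib

section
/- Let μ be a signed charge on a semi-ring 𝒮 and A ∈ 𝒮. Then (μ⁺ ∧ μ⁻)(A) = 0 if and only if at least one of μ⁺(A), μ⁻(A) is finite. Moreover, (μ⁺ ∧ μ⁻)(A) = 0 when μ⁺(A) < ∞ or μ⁻(A) < ∞, and (μ⁺ ∧ μ⁻)(A) = ∞ when μ⁺(A) = μ⁻(A) = ∞. -/
/-!
Passing from `μ` to `-μ` exchanges `μ⁺` and `μ⁻`, so it may be assumed that `μ` never takes the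
value `-∞`. Summing `max x 0 = x + max (-x) 0` over the pieces of a partition of `C` gives, after
taking suprema, `μ⁺(C) = μ(C) + μ⁻(C)` (`pos_eq_add_neg`). Two facts follow.

* `μ⁻(C) = ∞` forces `μ⁺(C) = ∞`. As `μ⁻` is subadditive over partitions (`neg_le_sum`), if
  `μ⁻(A) = ∞`, every partition of `A` has a piece on which both `μ⁺` and `μ⁻` are infinite, and
  `(μ⁺ ∧ μ⁻)(A) = ∞`.
* `min (μ⁺(C)) (μ⁻(C)) + max (-μ(C)) 0 ≤ μ⁻(C)` (`min_add_le`). As `μ⁻` is superadditive over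
  partitions (`sum_partSup_le`), summing over a partition of `A` and taking the supremum of
  `Σ max (-μ(C)) 0` gives `(μ⁺ ∧ μ⁻)(A) + μ⁻(A) ≤ μ⁻(A)`, so the infimum vanishes when
  `μ⁻(A) < ∞`.

The only case distinction left is therefore whether `μ⁻(A)` is finite, and `μ⁻(A) = ∞` implies
`μ⁺(A) = ∞`.
-/

open MeasureTheory Set
open scoped ENNReal NNReal BigOperators

namespace SignedCharges

variable {Ω : Type*}

/-- `P` is a finite partition of `A` by elements of the family `S`. -/
def IsPartition (S : Set (Set Ω)) (A : Set Ω) (P : Finset (Set Ω)) : Prop :=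
  ↑P ⊆ S ∧ (P : Set (Set Ω)).PairwiseDisjoint id ∧ ⋃₀ ↑P = A

/-- The partition-supremum `μ_F` of a family `F = (ν j)` of `EReal`-valued set functions:
`μ_F(A) = sup` over finite partitions `Π` of `A` by elements of `S` of `Σ_{C ∈ Π} sup_j ν j C`. -/
noncomputable def supFun {J : Type*} (S : Set (Set Ω)) (ν : J → Set Ω → EReal)
    (A : Set Ω) : EReal :=
  ⨆ P : Finset (Set Ω), ⨆ _ : IsPartition S A P, ∑ C ∈ P, ⨆ j, ν j C

/-- The admissibility hypothesis: `sup_j ν j A > -∞` for every `A ∈ S`. -/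
def Admissible {J : Type*} (S : Set (Set Ω)) (ν : J → Set Ω → EReal) : Prop :=
  ∀ A ∈ S, ⊥ < ⨆ j, ν j A

/-- An `EReal`-valued signed charge on `S`: vanishes on `∅`, finitely additive on finite
disjoint unions within `S`, and omits at least one of the values `+∞`, `-∞` on `S`. -/
structure IsCharge (S : Set (Set Ω)) (μ : Set Ω → EReal) : Prop where
  empty : μ ∅ = 0
  additive : ∀ (n : ℕ) (A : Fin n → Set Ω), (∀ i, A i ∈ S) →
    Pairwise (Function.onFun Disjoint A) → (⋃ i, A i) ∈ S → μ (⋃ i, A i) = ∑ i, μ (A i)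
  omits : (∀ A ∈ S, μ A ≠ ⊤) ∨ (∀ A ∈ S, μ A ≠ ⊥)

/-- A finite (real-valued) signed charge on `S`. -/
structure IsRealCharge (S : Set (Set Ω)) (μ : Set Ω → ℝ) : Prop where
  empty : μ ∅ = 0
  additive : ∀ (n : ℕ) (A : Fin n → Set Ω), (∀ i, A i ∈ S) →
    Pairwise (Function.onFun Disjoint A) → (⋃ i, A i) ∈ S → μ (⋃ i, A i) = ∑ i, μ (A i)

/-- Countable additivity for a real-valued set function (unconditional convergence). -/
def CountablyAdditiveR (S : Set (Set Ω)) (μ : Set Ω → ℝ) : Prop :=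
  ∀ A : ℕ → Set Ω, (∀ n, A n ∈ S) → Pairwise (Function.onFun Disjoint A) →
    (⋃ n, A n) ∈ S → HasSum (fun n => μ (A n)) (μ (⋃ n, A n))

/-- Countable sub-additivity for an `EReal`-valued set function. -/
def CountablySubadditiveE (S : Set (Set Ω)) (μ : Set Ω → EReal) : Prop :=
  ∀ A : ℕ → Set Ω, (∀ n, A n ∈ S) → Pairwise (Function.onFun Disjoint A) →
    (⋃ n, A n) ∈ S → μ (⋃ n, A n) ≤ ∑' n, μ (A n)

/-- Countable additivity for an `EReal`-valued set function. -/
def CountablyAdditiveE (S : Set (Set Ω)) (μ : Set Ω → EReal) : Prop :=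
  ∀ A : ℕ → Set Ω, (∀ n, A n ∈ S) → Pairwise (Function.onFun Disjoint A) →
    (⋃ n, A n) ∈ S → μ (⋃ n, A n) = ∑' n, μ (A n)

/-- `μ⁺ = μ ∨ 0` : sup over finite partitions of `Σ_{C} max (μ C) 0`. -/
noncomputable def pos (S : Set (Set Ω)) (μ : Set Ω → EReal) (A : Set Ω) : EReal :=
  ⨆ P : Finset (Set Ω), ⨆ _ : IsPartition S A P, ∑ C ∈ P, max (μ C) 0

/-- `μ⁻ = (-μ) ∨ 0` : sup over finite partitions of `Σ_{C} max (-μ C) 0`. -/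
noncomputable def neg (S : Set (Set Ω)) (μ : Set Ω → EReal) (A : Set Ω) : EReal :=
  ⨆ P : Finset (Set Ω), ⨆ _ : IsPartition S A P, ∑ C ∈ P, max (-μ C) 0

/-- The variation `|μ|` : sup over finite partitions of `Σ_{C} |μ C|`. -/
noncomputable def var (S : Set (Set Ω)) (μ : Set Ω → EReal) (A : Set Ω) : EReal :=
  ⨆ P : Finset (Set Ω), ⨆ _ : IsPartition S A P, ∑ C ∈ P, max (μ C) (-μ C)

/-- The infimum `α ∧ β` of two nonnegative charges:
inf over finite partitions of `Σ_{C} min (α C) (β C)`. -/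
noncomputable def infC (S : Set (Set Ω)) (α β : Set Ω → EReal) (A : Set Ω) : EReal :=
  ⨅ P : Finset (Set Ω), ⨅ _ : IsPartition S A P, ∑ C ∈ P, min (α C) (β C)

/-- The ring generated by a semi-ring: finite unions of elements of `S`. -/
def genRing (S : Set (Set Ω)) : Set (Set Ω) :=
  {A | ∃ P : Finset (Set Ω), ↑P ⊆ S ∧ A = ⋃₀ ↑P}

/-- Coercion of a real-valued set function to an `EReal`-valued one. -/
def toE (μ : Set Ω → ℝ) : Set Ω → EReal := fun A => (μ A : EReal)

/-- `μ` has finite variation on `S`. -/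
def FiniteVar (S : Set (Set Ω)) (μ : Set Ω → ℝ) : Prop :=
  ∀ A ∈ S, var S (toE μ) A ≠ ⊤


/-! ### Suprema over finite partitions -/
/-- The supremum of `Σ_{C ∈ P} f C` over the finite partitions `P` of `A` by elements of `S`. Both
`pos S μ` and `neg S μ` are definitionally of this form. -/
noncomputable def partSup (S : Set (Set Ω)) (f : Set Ω → EReal) (A : Set Ω) : EReal :=
  ⨆ P : Finset (Set Ω), ⨆ _ : IsPartition S A P, ∑ C ∈ P, f C

section Partitions

variable {S : Set (Set Ω)} {A : Set Ω} {P : Finset (Set Ω)} {f : Set Ω → EReal}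

lemma isPartition_singleton (hA : A ∈ S) : IsPartition S A {A} := by
  refine ⟨by simpa using hA, by simp, by simp⟩

lemma IsPartition.sum_le (hP : IsPartition S A P) : ∑ C ∈ P, f C ≤ partSup S f A :=
  le_iSup₂_of_le P hP le_rfl

lemma le_partSup (hA : A ∈ S) : f A ≤ partSup S f A := by
  simpa using (isPartition_singleton hA).sum_le (f := f)

lemma IsPartition.subset (hP : IsPartition S A P) {C : Set Ω} (hC : C ∈ P) : C ⊆ A := by
  rw [← hP.2.2]
  exact subset_sUnion_of_mem hC

open Classical in
/-- The traces on `D ⊆ A` of the pieces of a partition of `A` form a partition of `D`. -/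
lemma IsPartition.restrict (hS : IsSetSemiring S) (hP : IsPartition S A P) {D : Set Ω}
    (hD : D ∈ S) (hDA : D ⊆ A) : IsPartition S D (P.image (D ∩ ·)) := by
  refine ⟨?_, ?_, ?_⟩
  · intro X hX
    obtain ⟨C, hC, rfl⟩ := Finset.mem_image.1 (Finset.mem_coe.1 hX)
    exact hS.inter_mem _ hD _ (hP.1 hC)
  · intro X hX Y hY hXY
    obtain ⟨C, hC, rfl⟩ := Finset.mem_image.1 (Finset.mem_coe.1 hX)
    obtain ⟨C', hC', rfl⟩ := Finset.mem_image.1 (Finset.mem_coe.1 hY)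
    have hne : C ≠ C' := fun h => hXY (by rw [h])
    exact (hP.2.1 hC hC' hne).mono inter_subset_right inter_subset_right
  · rw [Finset.coe_image, sUnion_image, ← inter_iUnion₂, ← sUnion_eq_biUnion, hP.2.2]
    exact inter_eq_left.2 hDA

open Classical in
lemma IsPartition.sum_image_inter (hP : IsPartition S A P) (hf : f ∅ = 0) (D : Set Ω) :
    ∑ X ∈ P.image (D ∩ ·), f X = ∑ C ∈ P, f (D ∩ C) := by
  refine Finset.sum_image_of_disjoint (g := f) hf ?_
  intro C hC C' hC' hne
  exact (hP.2.1 hC hC' hne).mono inter_subset_right inter_subset_right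

open Classical in
/-- Partitions of the pieces of a partition of `A` assemble to a partition of `A`. -/
lemma IsPartition.biUnion (hP : IsPartition S A P) {k : Set Ω → Finset (Set Ω)}
    (hk : ∀ C ∈ P, IsPartition S C (k C)) : IsPartition S A (P.biUnion k) := by
  refine ⟨?_, ?_, ?_⟩
  · intro X hX
    obtain ⟨C, hC, hX⟩ := Finset.mem_biUnion.1 (Finset.mem_coe.1 hX)
    exact (hk C hC).1 hX
  · intro X hX Y hY hXY
    obtain ⟨C, hC, hX⟩ := Finset.mem_biUnion.1 (Finset.mem_coe.1 hX)
    obtain ⟨C', hC', hY⟩ := Finset.mem_biUnion.1 (Finset.mem_coe.1 hY)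
    by_cases h : C = C'
    · subst h
      exact (hk C hC).2.1 hX hY hXY
    · exact (hP.2.1 hC hC' h).mono ((hk C hC).subset hX) ((hk C' hC').subset hY)
  · rw [← hP.2.2]
    ext x
    simp only [mem_sUnion, Finset.mem_coe, Finset.mem_biUnion]
    constructor
    · rintro ⟨X, ⟨C, hC, hX⟩, hx⟩
      exact ⟨C, hC, (hk C hC).subset hX hx⟩
    · rintro ⟨C, hC, hx⟩
      rw [← (hk C hC).2.2] at hx
      obtain ⟨X, hX, hx⟩ := hx
      exact ⟨X, ⟨C, hC, hX⟩, hx⟩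

open Classical in
lemma IsPartition.sum_biUnion (hP : IsPartition S A P) {k : Set Ω → Finset (Set Ω)}
    (hk : ∀ C ∈ P, IsPartition S C (k C)) (hf : f ∅ = 0) :
    ∑ X ∈ P.biUnion k, f X = ∑ C ∈ P, ∑ X ∈ k C, f X := by
  refine Finset.sum_biUnion_of_pairwise_eq_zero ?_
  -- A piece common to two different members of the partition is empty.
  intro C hC C' hC' hne X hX
  rw [Finset.mem_inter] at hX
  have : X = ∅ := disjoint_self.1 <|
    (hP.2.1 hC hC' hne).mono ((hk C hC).subset hX.1) ((hk C' hC').subset hX.2)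
  rw [this, hf]

/-- A sum of the suprema `partSup S f C` is the supremum over independent choices of a partition
`k C` for each `C`; the extra summand `b` makes the induction go through. -/
lemma sum_partSup_add_le {x : EReal} (t : Finset (Set Ω)) (b : EReal)
    (h : ∀ k : Set Ω → Finset (Set Ω), (∀ C ∈ t, IsPartition S C (k C)) →
      ∑ C ∈ t, ∑ X ∈ k C, f X + b ≤ x) :
    ∑ C ∈ t, partSup S f C + b ≤ x := by
  classical
  induction t using Finset.induction_on generalizing b with
  | empty => simpa using h (fun _ => ∅) (by simp)
  | insert C t hC ih =>
    rw [Finset.sum_insert hC, add_comm (partSup S f C), add_assoc]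
    refine ih _ fun k hk => ?_
    rw [add_left_comm]
    refine EReal.add_le_of_forall_lt fun a ha c hc => ?_
    obtain ⟨Q, hQ⟩ := lt_iSup_iff.1 ha
    obtain ⟨hQC, haQ⟩ := lt_iSup_iff.1 hQ
    refine (add_le_add haQ.le hc.le).trans ?_
    have key := h (Function.update k C Q) ?_
    · rw [Finset.sum_insert hC, Function.update_self, add_assoc] at key
      have hk' : ∑ D ∈ t, ∑ X ∈ Function.update k C Q D, f X = ∑ D ∈ t, ∑ X ∈ k D, f X :=
        Finset.sum_congr rfl fun D hD => by
          rw [Function.update_of_ne (ne_of_mem_of_not_mem hD hC)]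
      rwa [hk'] at key
    · intro C' hC'
      by_cases h' : C' = C
      · subst h'
        rwa [Function.update_self]
      · rw [Function.update_of_ne h']
        exact hk C' (Finset.mem_of_mem_insert_of_ne hC' h')

lemma sum_partSup_le (hP : IsPartition S A P) (hf : f ∅ = 0) :
    ∑ C ∈ P, partSup S f C ≤ partSup S f A := by
  classical
  have := sum_partSup_add_le (S := S) (f := f) (x := partSup S f A) P 0 fun k hk => by
    rw [add_zero, ← hP.sum_biUnion hk hf]
    exact (hP.biUnion hk).sum_le
  simpa using this

end Partitions

/-! ### Arithmetic of extended reals -/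

lemma sum_ne_bot {ι : Type*} {s : Finset ι} {x : ι → EReal} (h : ∀ i ∈ s, x i ≠ ⊥) :
    ∑ i ∈ s, x i ≠ ⊥ := by
  classical
  induction s using Finset.induction_on with
  | empty => simp
  | insert i s hi ih =>
    rw [Finset.sum_insert hi, Ne, EReal.add_eq_bot_iff, not_or]
    exact ⟨h i (by simp), ih fun j hj => h j (by simp [hj])⟩

lemma neg_sum {ι : Type*} {s : Finset ι} {x : ι → EReal} (h : ∀ i ∈ s, x i ≠ ⊥) :
    -∑ i ∈ s, x i = ∑ i ∈ s, -x i := by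
  classical
  induction s using Finset.induction_on with
  | empty => simp
  | insert i s hi ih =>
    have hs : ∀ j ∈ s, x j ≠ ⊥ := fun j hj => h j (by simp [hj])
    rw [Finset.sum_insert hi, Finset.sum_insert hi, EReal.neg_add (.inl (h i (by simp)))
      (.inr (sum_ne_bot hs)), sub_eq_add_neg, ih hs]

/-- The identity `x⁺ = x + x⁻` holds at `x = ⊤` but fails at `x = ⊥`, where the right-hand side
is `⊥ + ⊤ = ⊥`. -/
lemma max_eq_add_max {x : EReal} (hx : x ≠ ⊥) : max x 0 = x + max (-x) 0 := by
  induction x with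
  | bot => exact absurd rfl hx
  | top => simp
  | coe r =>
    have h : max r 0 = r + max (-r) 0 := by
      rcases le_total r 0 with h | h
      · rw [max_eq_right h, max_eq_left (by linarith)]; ring
      · rw [max_eq_left h, max_eq_right (by linarith)]; ring
    have hmax : ∀ a b : ℝ, ((max a b : ℝ) : EReal) = max (a : EReal) b := fun a b =>
      EReal.coe_strictMono.monotone.map_max
    rw [← EReal.coe_neg, ← EReal.coe_zero, ← hmax, ← hmax, h, EReal.coe_add]

/-! ### Positive and negative parts of a charge -/

section Charge

variable {S : Set (Set Ω)} {μ : Set Ω → EReal} {A : Set Ω} {P : Finset (Set Ω)}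

lemma neg_apply_empty (hμ : IsCharge S μ) : max (-μ ∅) 0 = 0 := by simp [hμ.empty]

lemma IsCharge.eq_sum (hμ : IsCharge S μ) (hA : A ∈ S) (hP : IsPartition S A P) :
    μ A = ∑ C ∈ P, μ C := by
  have hU : (⋃ i, ((P.equivFin.symm i : P) : Set Ω)) = A := by
    rw [P.equivFin.symm.surjective.iUnion_comp (fun C : P => (C : Set Ω)), ← hP.2.2,
      sUnion_eq_iUnion]
    rfl
  have h := hμ.additive P.card (fun i => ((P.equivFin.symm i : P) : Set Ω))
    (fun i => hP.1 (P.equivFin.symm i).2)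
    (fun i j hij => hP.2.1 (P.equivFin.symm i).2 (P.equivFin.symm j).2
      fun h => hij (P.equivFin.symm.injective (Subtype.ext h)))
    (by rw [hU]; exact hA)
  rw [hU] at h
  rw [h, P.equivFin.symm.sum_comp (fun C : P => μ C), Finset.sum_coe_sort]

lemma sum_pos_eq (hμ : IsCharge S μ) (hbot : ∀ A ∈ S, μ A ≠ ⊥) (hA : A ∈ S)
    (hP : IsPartition S A P) :
    ∑ C ∈ P, max (μ C) 0 = μ A + ∑ C ∈ P, max (-μ C) 0 := by
  rw [hμ.eq_sum hA hP, ← Finset.sum_add_distrib]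
  exact Finset.sum_congr rfl fun C hC => max_eq_add_max (hbot C (hP.1 hC))

lemma pos_eq_add_neg (hμ : IsCharge S μ) (hbot : ∀ A ∈ S, μ A ≠ ⊥) (hA : A ∈ S) :
    pos S μ A = μ A + neg S μ A := by
  apply le_antisymm
  · refine iSup₂_le fun P hP => ?_
    rw [sum_pos_eq hμ hbot hA hP]
    gcongr
    exact hP.sum_le (f := fun C => max (-μ C) 0)
  · rw [add_comm]
    refine EReal.add_le_of_forall_lt fun a ha c hc => ?_
    obtain ⟨P, hP⟩ := lt_iSup_iff.1 ha
    obtain ⟨hPA, haP⟩ := lt_iSup_iff.1 hP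
    refine (add_le_add haP.le hc.le).trans ?_
    rw [add_comm, ← sum_pos_eq hμ hbot hA hPA]
    exact hPA.sum_le (f := fun C => max (μ C) 0)

lemma neg_part_nonneg (hA : A ∈ S) : 0 ≤ neg S μ A :=
  (le_max_right _ _).trans (le_partSup (f := fun C => max (-μ C) 0) hA)

lemma pos_part_nonneg (hA : A ∈ S) : 0 ≤ pos S μ A :=
  (le_max_right _ _).trans (le_partSup (f := fun C => max (μ C) 0) hA)

lemma max_neg_le_sum (hμ : IsCharge S μ) (hbot : ∀ A ∈ S, μ A ≠ ⊥) (hA : A ∈ S)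
    (hP : IsPartition S A P) : max (-μ A) 0 ≤ ∑ C ∈ P, max (-μ C) 0 := by
  refine max_le ?_ (Finset.sum_nonneg fun _ _ => le_max_right _ _)
  rw [hμ.eq_sum hA hP, neg_sum fun C hC => hbot C (hP.1 hC)]
  exact Finset.sum_le_sum fun _ _ => le_max_left _ _

/-- Subadditivity of `μ⁻`: a partition `Q` of `A` is refined by its traces on the members
of `P`. -/
lemma neg_le_sum (hS : IsSetSemiring S) (hμ : IsCharge S μ) (hbot : ∀ A ∈ S, μ A ≠ ⊥)
    (hP : IsPartition S A P) : neg S μ A ≤ ∑ C ∈ P, neg S μ C := by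
  classical
  refine iSup₂_le fun Q hQ => ?_
  have hf := neg_apply_empty hμ
  calc ∑ D ∈ Q, max (-μ D) 0
      ≤ ∑ D ∈ Q, ∑ C ∈ P, max (-μ (D ∩ C)) 0 := by
        refine Finset.sum_le_sum fun D hD => ?_
        rw [← hP.sum_image_inter (f := fun C => max (-μ C) 0) hf D]
        exact max_neg_le_sum hμ hbot (hQ.1 hD) (hP.restrict hS (hQ.1 hD) (hQ.subset hD))
    _ = ∑ C ∈ P, ∑ D ∈ Q, max (-μ (C ∩ D)) 0 := by
        rw [Finset.sum_comm]
        simp only [inter_comm]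
    _ ≤ ∑ C ∈ P, neg S μ C := by
        refine Finset.sum_le_sum fun C hC => ?_
        rw [← hQ.sum_image_inter (f := fun C => max (-μ C) 0) hf C]
        exact (hQ.restrict hS (hP.1 hC) (hP.subset hC)).sum_le (f := fun C => max (-μ C) 0)

/-- Where `μ` is nonnegative this bounds the minimum by `μ⁻`; where `μ` is negative the minimum is
bounded by `μ⁺ = μ + μ⁻`. -/
lemma min_add_le (hμ : IsCharge S μ) (hbot : ∀ A ∈ S, μ A ≠ ⊥) (hA : A ∈ S) :
    min (pos S μ A) (neg S μ A) + max (-μ A) 0 ≤ neg S μ A := by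
  rcases le_total 0 (μ A) with h | h
  · rw [max_eq_right (by simpa using h), add_zero]
    exact min_le_right _ _
  · -- Here `μ A` is a real number, and `μ⁺(A) + (-μ(A)) = μ⁻(A)`.
    rw [max_eq_left (by simpa using h)]
    refine (add_le_add_left (min_le_left _ _) _).trans ?_
    rw [pos_eq_add_neg hμ hbot hA]
    have hb := hbot A hA
    have ht : μ A ≠ ⊤ := fun h' => by simp [h'] at h
    generalize μ A = x at hb ht
    lift x to ℝ using ⟨ht, hb⟩
    rw [← sub_eq_add_neg, EReal.add_sub_cancel_left]

lemma pos_eq_top (hμ : IsCharge S μ) (hbot : ∀ A ∈ S, μ A ≠ ⊥) (hA : A ∈ S)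
    (h : neg S μ A = ⊤) : pos S μ A = ⊤ := by
  rw [pos_eq_add_neg hμ hbot hA, h, EReal.add_top_of_ne_bot (hbot A hA)]

/-- For every partition `P` of `A`, the estimate `min_add_le` summed over `P` gives
`(μ⁺ ∧ μ⁻)(A) + Σ_{C ∈ P} max (-μ C) 0 ≤ μ⁻(A)`; the supremum over `P` leaves room only for
`(μ⁺ ∧ μ⁻)(A) ≤ 0`. -/
lemma infC_eq_zero (hμ : IsCharge S μ) (hbot : ∀ A ∈ S, μ A ≠ ⊥) (hA : A ∈ S)
    (h : neg S μ A ≠ ⊤) : infC S (pos S μ) (neg S μ) A = 0 := by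
  apply le_antisymm
  · have key : neg S μ A + infC S (pos S μ) (neg S μ) A ≤ neg S μ A := by
      refine EReal.add_le_of_forall_lt fun a ha c hc => ?_
      obtain ⟨P, hP⟩ := lt_iSup_iff.1 ha
      obtain ⟨hPA, haP⟩ := lt_iSup_iff.1 hP
      have hc' : c ≤ ∑ C ∈ P, min (pos S μ C) (neg S μ C) :=
        hc.le.trans (iInf₂_le P hPA)
      refine (add_le_add haP.le hc').trans ?_
      rw [add_comm, ← Finset.sum_add_distrib]
      exact (Finset.sum_le_sum fun C hC => min_add_le hμ hbot (hPA.1 hC)).trans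
        (sum_partSup_le (f := fun C => max (-μ C) 0) hPA (neg_apply_empty hμ))
    have h0 : neg S μ A ≠ ⊥ := ((EReal.bot_lt_zero).trans_le (neg_part_nonneg hA)).ne'
    lift neg S μ A to ℝ using ⟨h, h0⟩ with y
    have := EReal.sub_le_of_le_add' (key.trans (add_zero (y : EReal)).ge)
    rwa [EReal.add_sub_cancel_left] at this
  · exact le_iInf₂ fun P hP => Finset.sum_nonneg fun C hC =>
      le_min (pos_part_nonneg (hP.1 hC)) (neg_part_nonneg (hP.1 hC))

/-- Every partition of `A` has a piece with infinite `μ⁻`, hence also with infinite `μ⁺`. -/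
lemma infC_eq_top (hS : IsSetSemiring S) (hμ : IsCharge S μ) (hbot : ∀ A ∈ S, μ A ≠ ⊥)
    (h : neg S μ A = ⊤) : infC S (pos S μ) (neg S μ) A = ⊤ := by
  rw [eq_top_iff]
  refine le_iInf₂ fun P hP => ?_
  obtain ⟨C, hC, hCtop⟩ : ∃ C ∈ P, neg S μ C = ⊤ := by
    by_contra! hne
    -- A sum of finite nonnegative terms is finite; this is read off from its negative.
    have hlt : ∑ C ∈ P, -neg S μ C ≠ ⊥ := sum_ne_bot fun C hC => by simpa using hne C hC
    have hle := neg_le_sum hS hμ hbot hP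
    rw [h, top_le_iff] at hle
    rw [← neg_sum fun C hC => ((EReal.bot_lt_zero).trans_le (neg_part_nonneg (hP.1 hC))).ne',
      hle] at hlt
    exact hlt rfl
  calc (⊤ : EReal) = min (pos S μ C) (neg S μ C) := by
        rw [hCtop, pos_eq_top hμ hbot (hP.1 hC) hCtop, min_self]
    _ ≤ ∑ C ∈ P, min (pos S μ C) (neg S μ C) :=
        Finset.single_le_sum (f := fun C => min (pos S μ C) (neg S μ C))
          (fun D hD => le_min (pos_part_nonneg (hP.1 hD)) (neg_part_nonneg (hP.1 hD))) hC

lemma neg_charge (hμ : IsCharge S μ) (htop : ∀ A ∈ S, μ A ≠ ⊤) :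
    IsCharge S (fun A => -μ A) where
  empty := by simp [hμ.empty]
  additive n B hB hd hU := by
    rw [hμ.additive n B hB hd hU, neg_eq_iff_eq_neg,
      neg_sum fun i _ => by simpa using htop _ (hB i)]
    simp only [neg_neg]
  omits := .inr fun A hA => by simpa using htop A hA

lemma pos_neg_charge : pos S (fun A => -μ A) = neg S μ := rfl

lemma neg_neg_charge : neg S (fun A => -μ A) = pos S μ := by
  funext A
  simp only [neg, pos, neg_neg]

lemma infC_comm (α β : Set Ω → EReal) : infC S α β = infC S β α := by
  funext A
  simp only [infC, min_comm]

end Charge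

/-- `(μ⁺ ∧ μ⁻)(A) = 0` iff at least one of `μ⁺(A)`, `μ⁻(A)` is finite;
moreover `(μ⁺ ∧ μ⁻)(A) = ∞` when both are infinite. -/
theorem statement14 {Ω : Type*} (S : Set (Set Ω)) (hS : MeasureTheory.IsSetSemiring S)
    (μ : Set Ω → EReal) (hμ : IsCharge S μ) (A : Set Ω) (hA : A ∈ S) :
    (infC S (pos S μ) (neg S μ) A = 0 ↔ (pos S μ A ≠ ⊤ ∨ neg S μ A ≠ ⊤)) ∧
    ((pos S μ A ≠ ⊤ ∨ neg S μ A ≠ ⊤) → infC S (pos S μ) (neg S μ) A = 0) ∧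
    ((pos S μ A = ⊤ ∧ neg S μ A = ⊤) → infC S (pos S μ) (neg S μ) A = ⊤) := by
  have h2 : (pos S μ A ≠ ⊤ ∨ neg S μ A ≠ ⊤) → infC S (pos S μ) (neg S μ) A = 0 := by
    intro h
    rcases hμ.omits with htop | hbot
    -- When `μ` omits `⊤`, the lemmas apply to `-μ`, whose parts are those of `μ` exchanged.
    · have hμ' := neg_charge hμ htop
      have hbot' : ∀ A ∈ S, -μ A ≠ ⊥ := fun A hA => by simpa using htop A hA
      rw [infC_comm, ← pos_neg_charge (μ := μ), ← neg_neg_charge (μ := μ)]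
      refine infC_eq_zero hμ' hbot' hA fun h' => ?_
      have := pos_eq_top hμ' hbot' hA h'
      rw [pos_neg_charge] at this
      rw [neg_neg_charge] at h'
      exact h.elim (fun h => h h') (fun h => h this)
    · refine infC_eq_zero hμ hbot hA fun h' => ?_
      exact h.elim (fun h => h (pos_eq_top hμ hbot hA h')) (fun h => h h')
  have h3 : (pos S μ A = ⊤ ∧ neg S μ A = ⊤) → infC S (pos S μ) (neg S μ) A = ⊤ := by
    rintro ⟨hp, hn⟩
    rcases hμ.omits with htop | hbot
    · have hbot' : ∀ A ∈ S, -μ A ≠ ⊥ := fun A hA => by simpa using htop A hA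
      rw [infC_comm, ← pos_neg_charge (μ := μ), ← neg_neg_charge (μ := μ)]
      exact infC_eq_top hS (neg_charge hμ htop) hbot' (by rwa [neg_neg_charge])
    · exact infC_eq_top hS hμ hbot hn
  refine ⟨⟨fun h => ?_, h2⟩, h2, h3⟩
  by_contra! h'
  rw [h3 h'] at h
  exact EReal.top_ne_zero h

end SignedCharges
end

section
/- Let μ be a signed charge on a semi-ring 𝒮, extended additively to the generated ring ℛ, and let A ∈ ℛ. If μ⁺(A) < ∞ or μ⁻(A) < ∞, then for every ε > 0 there exists an ε-Hahn decomposition for μ on A. Conversely, if μ⁺(A) = μ⁻(A) = ∞, then there exists ε > 0 for which no ε-Hahn decomposition for μ on A exists. -/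
/-!
If `μ⁺(A) < ∞`, then `s = sup {μ B | B ⊆ A}` is finite, since `μ B ≤ μ⁺(A)`. Take `G ⊆ A` with
`μ G > s - ε`. A set `B ⊆ A \ G` satisfies `μ B + μ G = μ (B ∪ G) ≤ s`, so `μ B ≤ ε`; a set
`D ⊆ G` satisfies `μ D + μ (G \ D) = μ G > s - ε` and `μ (G \ D) ≤ s`, so `μ D ≥ -ε`. Hence
`H = A \ G` works (`exists_isEpsHahn_of_pos_ne_top`).

Conversely, suppose that `μ` omits the value `∞` and that `{H, A \ H}` is an `ε`-Hahn decomposition,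
for any real `ε`. For `B ⊆ A` one has `μ B = μ (B ∩ H) + μ (B \ H) ≤ ε + (ε + μ (A \ H))`, a finite
bound independent of `B`. Since `μ⁺(A)` is also the supremum of `μ B` over `B ⊆ A` (`le_pos`,
`pos_le`), it is finite (`pos_ne_top_of_isEpsHahn`).

The cases of finite `μ⁻(A)`, and of `μ` omitting `-∞`, follow by applying this to `-μ`, which
swaps `μ⁺` with `μ⁻` and `H` with `A \ H`.
-/


open MeasureTheory Set
open scoped ENNReal NNReal BigOperators

namespace SignedCharges

variable {Ω : Type*}

/-- An `ε`-Hahn decomposition `{H, A \ H}` for `μ` on `A`, by elements of the ring `R`. -/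
def IsEpsHahn (R : Set (Set Ω)) (μ : Set Ω → EReal) (ε : ℝ) (A H : Set Ω) : Prop :=
  H ∈ R ∧ H ⊆ A ∧ A \ H ∈ R ∧
  (∀ B ∈ R, B ⊆ H → μ B ≤ (ε : EReal)) ∧
  (∀ D ∈ R, D ⊆ A \ H → ((-ε : ℝ) : EReal) ≤ μ D)

/-! ### The generated ring and additivity on pairs -/

theorem isSetRing_genRing {Ω : Type*} {S : Set (Set Ω)} (hS : IsSetSemiring S) :
    IsSetRing (genRing S) := by
  have h : genRing S = supClosure S := by
    ext A
    constructor
    · rintro ⟨P, hP, rfl⟩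
      exact supClosed_supClosure.sSup_mem P.finite_toSet
        (subset_supClosure hS.empty_mem) (hP.trans subset_supClosure)
    · intro hA
      obtain ⟨P, hP⟩ := hS.mem_supClosure_iff.mp hA
      refine ⟨P.parts, hP, ?_⟩
      rw [← Set.sSup_eq_sUnion, ← Finset.sup_id_eq_sSup, P.sup_parts]
  rw [h]
  exact hS.isSetRing_supClosure

/-- Additivity on pairs. This is the form of finite additivity that is used throughout, because
it passes from `μ` to `-μ` for a signed charge. -/
def PairAdditive {Ω : Type*} (R : Set (Set Ω)) (μ : Set Ω → EReal) : Prop :=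
  ∀ B ∈ R, ∀ C ∈ R, Disjoint B C → μ (B ∪ C) = μ B + μ C

theorem IsCharge.pairAdditive {Ω : Type*} {R : Set (Set Ω)} {μ : Set Ω → EReal}
    (hR : IsSetRing R) (hμ : IsCharge R μ) : PairAdditive R μ := by
  intro B hB C hC hBC
  have hU : (⋃ i, ![B, C] i) = B ∪ C := by
    ext x
    simp [Fin.exists_fin_two]
  have h := hμ.additive 2 ![B, C] (by simp [Fin.forall_fin_two, hB, hC])
    (by
      intro i j hij
      fin_cases i <;> fin_cases j <;> simp_all [Function.onFun, disjoint_comm])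
    (by rw [hU]; exact hR.union_mem hB hC)
  rw [hU] at h
  simpa [Fin.sum_univ_two] using h

/-- Since a signed charge omits `⊤` or `⊥`, negation distributes over the sums that occur. -/
theorem IsCharge.pairAdditive_neg {Ω : Type*} {R : Set (Set Ω)} {μ : Set Ω → EReal}
    (hR : IsSetRing R) (hμ : IsCharge R μ) : PairAdditive R (fun B => -μ B) := by
  intro B hB C hC hBC
  change -μ (B ∪ C) = -μ B + -μ C
  rw [hμ.pairAdditive hR B hB C hC hBC, ← sub_eq_add_neg]
  rcases hμ.omits with h | h
  · exact EReal.neg_add (Or.inr (h C hC)) (Or.inl (h B hB))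
  · exact EReal.neg_add (Or.inl (h B hB)) (Or.inr (h C hC))

/-! ### Passing to the negative of a charge -/

theorem pos_neg_eq_neg {Ω : Type*} (R : Set (Set Ω)) (μ : Set Ω → EReal) (A : Set Ω) :
    pos R (fun B => -μ B) A = neg R μ A := rfl

/-- Passing to `-μ` exchanges the two pieces of an `ε`-Hahn decomposition. The relation between
`μ` and `ν` is a hypothesis so that the lemma applies in both directions. -/
theorem IsEpsHahn.compl_of_neg {Ω : Type*} {R : Set (Set Ω)} {μ ν : Set Ω → EReal}
    (hν : ∀ B, ν B = -μ B) {ε : ℝ} {A H : Set Ω}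
    (h : IsEpsHahn R ν ε A H) : IsEpsHahn R μ ε A (A \ H) := by
  obtain ⟨hH, hHA, hAH, h1, h2⟩ := h
  have hH' : A \ (A \ H) = H := Set.sdiff_sdiff_cancel_left hHA
  refine ⟨hAH, Set.sdiff_subset, hH'.symm ▸ hH, fun B hB hBH => ?_, fun D hD hDH => ?_⟩
  · have := h2 B hB hBH
    rw [hν, EReal.coe_neg] at this
    exact EReal.neg_le_neg_iff.mp this
  · have := h1 D hD (hH' ▸ hDH)
    rw [hν] at this
    rw [EReal.coe_neg]
    exact EReal.neg_le_of_neg_le this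

/-! ### Finite positive part gives a decomposition -/

theorem le_pos {Ω : Type*} {R : Set (Set Ω)} {μ : Set Ω → EReal} (hR : IsSetRing R)
    {A B : Set Ω} (hA : A ∈ R) (hB : B ∈ R) (hBA : B ⊆ A) : μ B ≤ pos R μ A := by
  classical
  have hP : IsPartition R A {B, A \ B} := by
    refine ⟨?_, ?_, ?_⟩
    · intro C hC
      have : C = B ∨ C = A \ B := by simpa using hC
      rcases this with rfl | rfl
      · exact hB
      · exact hR.sdiff_mem hA hB
    · rw [Finset.coe_pair]
      exact Set.pairwise_pair.mpr fun _ =>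
        ⟨Set.disjoint_sdiff_right, Set.disjoint_sdiff_left⟩
    · rw [Finset.coe_pair, Set.sUnion_pair]
      exact Set.union_sdiff_cancel hBA
  calc μ B ≤ max (μ B) 0 := le_max_left _ _
    _ ≤ ∑ C ∈ ({B, A \ B} : Finset (Set Ω)), max (μ C) 0 :=
        Finset.single_le_sum (f := fun C => max (μ C) 0) (fun _ _ => le_max_right _ _) (by simp)
    _ ≤ pos R μ A := le_iSup₂_of_le _ hP le_rfl

/-- The set `G ⊆ A` is chosen so that `μ G` is within `ε` of the supremum of `μ` over the
members of `R` contained in `A`; then `A \ G` is the almost negative piece. -/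
theorem exists_isEpsHahn_of_pos_ne_top {Ω : Type*} {R : Set (Set Ω)} {μ : Set Ω → EReal}
    (hR : IsSetRing R) (h0 : μ ∅ = 0) (hadd : PairAdditive R μ) {A : Set Ω} (hA : A ∈ R)
    (hpos : pos R μ A ≠ ⊤) {ε : ℝ} (hε : 0 < ε) : ∃ H, IsEpsHahn R μ ε A H := by
  obtain ⟨s, hs⟩ : ∃ s : EReal, s = ⨆ B : {B : Set Ω // B ∈ R ∧ B ⊆ A}, μ B := ⟨_, rfl⟩
  have hle : ∀ B ∈ R, B ⊆ A → μ B ≤ s := fun B hB hBA =>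
    hs ▸ le_iSup (fun B : {B : Set Ω // B ∈ R ∧ B ⊆ A} => μ B) ⟨B, hB, hBA⟩
  have hs_top : s ≠ ⊤ := by
    refine ne_top_of_le_ne_top hpos ?_
    rw [hs]
    exact iSup_le fun B => le_pos hR hA B.2.1 B.2.2
  have hs_nonneg : 0 ≤ s := h0 ▸ hle ∅ hR.empty_mem (Set.empty_subset A)
  lift s to ℝ using ⟨hs_top, fun h => by simp [h] at hs_nonneg⟩
  obtain ⟨⟨G, hG, hGA⟩, hsG⟩ : ∃ B : {B : Set Ω // B ∈ R ∧ B ⊆ A}, ((s - ε : ℝ) : EReal) < μ B :=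
    lt_iSup_iff.mp (hs ▸ EReal.coe_lt_coe_iff.mpr (by linarith))
  change ((s - ε : ℝ) : EReal) < μ G at hsG
  have hAG : A \ (A \ G) = G := Set.sdiff_sdiff_cancel_left hGA
  refine ⟨A \ G, hR.sdiff_mem hA hG, Set.sdiff_subset, hAG.symm ▸ hG, ?_, ?_⟩
  · intro B hB hBG
    have h1 : μ (B ∪ G) ≤ s :=
      hle _ (hR.union_mem hB hG) (Set.union_subset (hBG.trans Set.sdiff_subset) hGA)
    rw [hadd B hB G hG (Set.disjoint_of_subset_left hBG Set.disjoint_sdiff_left)] at h1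
    have h2 := hle G hG hGA
    clear hs hle
    generalize μ B = x at *
    generalize μ G = y at *
    induction x <;> induction y <;> simp_all [← EReal.coe_add, -EReal.coe_sub] <;> linarith
  · intro D hD hDG
    rw [hAG] at hDG
    have h1 : μ (D ∪ G \ D) = μ D + μ (G \ D) :=
      hadd D hD _ (hR.sdiff_mem hG hD) Set.disjoint_sdiff_right
    rw [Set.union_sdiff_cancel hDG] at h1
    have h2 := hle _ (hR.sdiff_mem hG hD) (Set.sdiff_subset.trans hGA)
    rw [h1] at hsG
    clear hs hle
    generalize μ D = x at *
    generalize μ (G \ D) = y at *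
    induction x <;> induction y <;>
      simp_all [← EReal.coe_add, -EReal.coe_sub, -EReal.coe_neg] <;> linarith

/-! ### A decomposition bounds the positive part -/

theorem sUnion_mem_and_apply_sUnion {Ω : Type*} {R : Set (Set Ω)} {μ : Set Ω → EReal}
    (hR : IsSetRing R) (h0 : μ ∅ = 0) (hadd : PairAdditive R μ) (P : Finset (Set Ω)) :
    ↑P ⊆ R → (P : Set (Set Ω)).PairwiseDisjoint id →
      ⋃₀ (P : Set (Set Ω)) ∈ R ∧ μ (⋃₀ ↑P) = ∑ C ∈ P, μ C := by
  classical
  induction P using Finset.induction_on with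
  | empty => intro _ _; simpa [h0] using hR.empty_mem
  | insert C P hC ih =>
    intro hP hd
    rw [Finset.coe_insert] at hP hd ⊢
    obtain ⟨hmem, hsum⟩ := ih ((Set.subset_insert _ _).trans hP) (hd.subset (Set.subset_insert _ _))
    have hCR : C ∈ R := hP (Set.mem_insert _ _)
    have hdisj : Disjoint C (⋃₀ (P : Set (Set Ω))) := by
      rw [Set.disjoint_sUnion_right]
      intro D hD
      exact hd (Set.mem_insert _ _) (Set.mem_insert_of_mem _ hD)
        (fun h => hC (h ▸ Finset.mem_coe.mp hD))
    rw [Set.sUnion_insert, Finset.sum_insert hC, ← hsum]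
    exact ⟨hR.union_mem hCR hmem, hadd C hCR _ hmem hdisj⟩

/-- For a given partition, the sum of the positive parts is the value of `μ` on the union of the
pieces of positive charge. -/
theorem pos_le {Ω : Type*} {R : Set (Set Ω)} {μ : Set Ω → EReal}
    (hR : IsSetRing R) (h0 : μ ∅ = 0) (hadd : PairAdditive R μ) {A : Set Ω} {b : EReal}
    (hb : ∀ B ∈ R, B ⊆ A → μ B ≤ b) : pos R μ A ≤ b := by
  classical
  refine iSup₂_le fun P hP => ?_
  obtain ⟨hPR, hPd, hPA⟩ := hP
  have hsub : ((P.filter fun C => 0 < μ C : Finset (Set Ω)) : Set (Set Ω)) ⊆ P :=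
    Finset.coe_subset.mpr (Finset.filter_subset _ _)
  obtain ⟨hmem, hsum⟩ := sUnion_mem_and_apply_sUnion hR h0 hadd (P.filter fun C => 0 < μ C)
    (hsub.trans hPR) (hPd.subset hsub)
  have heq : ∑ C ∈ P, max (μ C) 0 = ∑ C ∈ P.filter (fun C => 0 < μ C), μ C := by
    rw [Finset.sum_filter]
    refine Finset.sum_congr rfl fun C _ => ?_
    split_ifs with h
    · exact max_eq_left h.le
    · exact max_eq_right (not_lt.mp h)
  rw [heq, ← hsum]
  exact hb _ hmem ((Set.sUnion_subset_sUnion hsub).trans hPA.subset)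

/-- An `ε`-Hahn decomposition `{H, A \ H}` bounds `μ` on the subsets of `A` by
`2 * ε + μ (A \ H)`, which is finite when `μ` omits `⊤`. -/
theorem pos_ne_top_of_isEpsHahn {Ω : Type*} {R : Set (Set Ω)} {μ : Set Ω → EReal}
    (hR : IsSetRing R) (h0 : μ ∅ = 0) (hadd : PairAdditive R μ) (htop : ∀ B ∈ R, μ B ≠ ⊤)
    {A H : Set Ω} {ε : ℝ} (h : IsEpsHahn R μ ε A H) : pos R μ A ≠ ⊤ := by
  obtain ⟨hH, hHA, hAH, h1, h2⟩ := h
  have hfin : (ε : EReal) + (ε + μ (A \ H)) ≠ ⊤ :=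
    EReal.add_ne_top (EReal.coe_ne_top _) (EReal.add_ne_top (EReal.coe_ne_top _) (htop _ hAH))
  refine ne_top_of_le_ne_top hfin (pos_le hR h0 hadd fun B hB hBA => ?_)
  have hBH : B \ H ⊆ A \ H := Set.sdiff_subset_sdiff_left hBA
  have hBHR := hR.sdiff_mem hB hH
  have hE := hR.sdiff_mem hAH hBHR
  have e1 := hadd (B ∩ H) (hR.inter_mem hB hH) (B \ H) hBHR Set.disjoint_sdiff_inter.symm
  rw [Set.inter_union_sdiff] at e1
  have e2 := hadd (B \ H) hBHR _ hE Set.disjoint_sdiff_right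
  rw [Set.union_sdiff_cancel hBH] at e2
  rw [e1]
  refine add_le_add (h1 _ (hR.inter_mem hB hH) Set.inter_subset_right) ?_
  rw [e2]
  have h3 := h2 _ hE Set.sdiff_subset
  have h4 := htop _ hE
  generalize μ (B \ H) = x at *
  generalize μ ((A \ H) \ (B \ H)) = y at *
  induction x <;> induction y <;>
    simp_all [← EReal.coe_add, -EReal.coe_neg] <;> linarith

/-- `ε`-Hahn decomposition for a signed charge on the ring generated by a
semi-ring: it exists for every `ε > 0` iff one of `μ⁺(A)`, `μ⁻(A)` is finite. -/
theorem statement16 {Ω : Type*} (S : Set (Set Ω)) (hS : MeasureTheory.IsSetSemiring S)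
    (μ : Set Ω → EReal) (hμ : IsCharge (genRing S) μ)
    (A : Set Ω) (hA : A ∈ genRing S) :
    ((pos (genRing S) μ A ≠ ⊤ ∨ neg (genRing S) μ A ≠ ⊤) →
      ∀ ε : ℝ, 0 < ε → ∃ H : Set Ω, IsEpsHahn (genRing S) μ ε A H) ∧
    ((pos (genRing S) μ A = ⊤ ∧ neg (genRing S) μ A = ⊤) →
      ∃ ε : ℝ, 0 < ε ∧ ∀ H : Set Ω, ¬ IsEpsHahn (genRing S) μ ε A H) := by
  have hR := isSetRing_genRing hS
  have hadd := hμ.pairAdditive hR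
  have hadd' := hμ.pairAdditive_neg hR
  have h0' : (fun B => -μ B) ∅ = 0 := by simp [hμ.empty]
  constructor
  · rintro (h | h) ε hε
    · exact exists_isEpsHahn_of_pos_ne_top hR hμ.empty hadd hA h hε
    · obtain ⟨H, hH⟩ := exists_isEpsHahn_of_pos_ne_top hR h0' hadd' hA
        ((pos_neg_eq_neg _ μ A).trans_ne h) hε
      exact ⟨A \ H, hH.compl_of_neg fun _ => rfl⟩
  · rintro ⟨hp, hn⟩
    -- No positive `ε` admits a decomposition, so any choice will do.
    refine ⟨1, one_pos, fun H hH => ?_⟩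
    rcases hμ.omits with h | h
    · exact pos_ne_top_of_isEpsHahn hR hμ.empty hadd h hH hp
    · have hH' : IsEpsHahn (genRing S) (fun B => -μ B) 1 A (A \ H) :=
        hH.compl_of_neg fun B => (neg_neg (μ B)).symm
      exact pos_ne_top_of_isEpsHahn hR h0' hadd'
        (fun B hB hB' => h B hB (EReal.neg_eq_top_iff.mp hB')) hH'
        ((pos_neg_eq_neg _ μ A).trans hn)

end SignedCharges
end

section
/- Let (S, 𝒜, ν) be a σ-finite measure space and 𝔉 a family of measurable functions from S into (-∞,∞] with ∫ f⁻ dν < ∞ for each f ∈ 𝔉. Let (f_j)_{j∈ℕ} be a sequence in 𝔉 such that f̌ := sup_j f_j satisfies sup_{f∈𝔉} f = f̌ pointwise. For f ∈ 𝔉 let μ_f be the signed measure μ_f(A) := ∫_A f dν, and let μ̌ := sup_{f∈𝔉} μ_f (partition-supremum over measurable partitions). Then μ̌ = sup_{j∈ℕ} μ_{f_j} and μ̌(A) = ∫_A f̌ dν for every A ∈ 𝒜. -/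
/-!
Each `μ_f` is additive on finite measurable partitions and monotone in `f`, so every partition sum
`Σ_C sup_f μ_f(C)` is at most `Σ_C ∫_C f̌ dν = ∫_A f̌ dν`; this bounds both partition-suprema from
above (`supFun_le_eIntegral`).

For the converse, let `g_n = max_{j ≤ n} f_j`. Splitting `A` according to the first index `j ≤ n` at
which the maximum is attained gives `∫_A g_n dν = Σ_j μ_{f_j}(B_j)`, at most a partition sum
(`eIntegral_partialSups_le_supFun`). Since `g_n` increases to `f̌`, monotone convergence for the
positive parts and dominated convergence (by the integrable `f_0⁻`) for the negative parts give
`∫_A g_n dν → ∫_A f̌ dν` (`tendsto_eIntegral`). The negative parts have finite integral throughout,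
so no `∞ - ∞` arises in the `EReal` subtractions.
-/

open MeasureTheory Set
open scoped ENNReal NNReal BigOperators

namespace SignedCharges

variable {Ω : Type*}

/-- The positive part of an extended real, as an element of `[0, ∞]`. -/
noncomputable def erealToENNReal (x : EReal) : ℝ≥0∞ :=
  if x = ⊤ then ⊤ else ENNReal.ofReal x.toReal

/-- The (`EReal`-valued) integral `∫_A f dν` of an extended-real-valued function,
defined as `∫_A f⁺ dν - ∫_A f⁻ dν`. -/
noncomputable def eIntegral {S : Type*} [MeasurableSpace S] (ν : Measure S)
    (f : S → EReal) (A : Set S) : EReal :=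
  ((∫⁻ x in A, erealToENNReal (f x) ∂ν : ℝ≥0∞) : EReal) -
    ((∫⁻ x in A, erealToENNReal (-f x) ∂ν : ℝ≥0∞) : EReal)

theorem eIntegral_mono {S : Type*} [MeasurableSpace S] (ν : Measure S) {f g : S → EReal}
    {A : Set S} (hA : MeasurableSet A) (h : ∀ x ∈ A, f x ≤ g x) :
    eIntegral ν f A ≤ eIntegral ν g A := by
  refine EReal.sub_le_sub ?_ ?_
  · exact EReal.coe_ennreal_le_coe_ennreal_iff.2
      (setLIntegral_mono' hA fun x hx => EReal.toENNReal_le_toENNReal (h x hx))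
  · exact EReal.coe_ennreal_le_coe_ennreal_iff.2
      (setLIntegral_mono' hA fun x hx =>
        EReal.toENNReal_le_toENNReal (EReal.neg_le_neg_iff.2 (h x hx)))

theorem sum_coe_sub_coe {ι : Type*} (s : Finset ι) (a b : ι → ℝ≥0∞) (hb : ∀ i ∈ s, b i ≠ ⊤) :
    ∑ i ∈ s, ((a i : EReal) - (b i : EReal)) =
      ((∑ i ∈ s, a i : ℝ≥0∞) : EReal) - ((∑ i ∈ s, b i : ℝ≥0∞) : EReal) := by
  classical
  induction s using Finset.induction_on with
  | empty => simp
  | insert i s hi ih =>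
    have hbi : b i ≠ ⊤ := hb i (Finset.mem_insert_self _ _)
    rw [Finset.sum_insert hi, Finset.sum_insert hi, Finset.sum_insert hi,
      ih fun j hj => hb j (Finset.mem_insert_of_mem hj),
      EReal.coe_ennreal_add, EReal.coe_ennreal_add,
      EReal.add_sub_add_comm (.inl (EReal.coe_ennreal_ne_bot _))
        (.inl (by simpa using hbi))]

/-- Finite additivity of `A ↦ ∫_A f dν`; integrability of `f⁻` is what makes the `EReal`
differences add up. -/
theorem sum_eIntegral {S : Type*} [MeasurableSpace S] (ν : Measure S) {f : S → EReal}
    (hf : (∫⁻ x, erealToENNReal (-f x) ∂ν) < ⊤) {A : Set S} {P : Finset (Set S)}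
    (hP : IsPartition {B : Set S | MeasurableSet B} A P) :
    ∑ C ∈ P, eIntegral ν f C = eIntegral ν f A := by
  obtain ⟨hm, hd, rfl⟩ := hP
  have key (h : S → ℝ≥0∞) : ∫⁻ x in ⋃₀ (P : Set (Set S)), h x ∂ν = ∑ C ∈ P, ∫⁻ x in C, h x ∂ν := by
    rw [sUnion_eq_biUnion]
    exact lintegral_biUnion_finset (t := id) hd (fun C hC => hm hC) h
  simp only [eIntegral, key]
  exact sum_coe_sub_coe _ _ _ fun C _ => ((setLIntegral_le_lintegral C _).trans_lt hf).ne

theorem supFun_le_eIntegral {S J : Type*} [MeasurableSpace S] (ν : Measure S)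
    (f : J → S → EReal) {g : S → EReal} (hg : (∫⁻ x, erealToENNReal (-g x) ∂ν) < ⊤)
    (h : ∀ j x, f j x ≤ g x) (A : Set S) :
    supFun {B : Set S | MeasurableSet B} (fun j => eIntegral ν (f j)) A ≤ eIntegral ν g A := by
  refine iSup₂_le fun P hP => ?_
  rw [← sum_eIntegral ν hg hP]
  exact Finset.sum_le_sum fun C hC => iSup_le fun j =>
    eIntegral_mono ν (hP.1 hC) fun x _ => h j x

/-- The integral of `max_{j ≤ n} f_j` over `A` is at most the partition sum for the partition of `A`
by the first index at which the maximum is attained. -/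
theorem eIntegral_partialSups_le_supFun {S : Type*} [MeasurableSpace S] (ν : Measure S)
    (f : ℕ → S → EReal) (hf : ∀ j, Measurable (f j)) (n : ℕ)
    (hn : (∫⁻ x, erealToENNReal (-(partialSups f n x)) ∂ν) < ⊤)
    (hmeas : Measurable (partialSups f n)) {A : Set S} (hA : MeasurableSet A) :
    eIntegral ν (partialSups f n) A ≤
      supFun {B : Set S | MeasurableSet B} (fun j => eIntegral ν (f j)) A := by
  classical
  let E : ℕ → Set S := fun j => {x | f j x = partialSups f n x}
  have hE : ∀ j, MeasurableSet (E j) := fun j => measurableSet_eq_fun (hf j) hmeas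
  let B : ℕ → Set S := fun j => A ∩ disjointed E j
  have hB : ∀ j, MeasurableSet (B j) := fun j => hA.inter (MeasurableSet.disjointed hE j)
  let P : Finset (Set S) := (Finset.range (n + 1)).image B
  have hP : IsPartition {B : Set S | MeasurableSet B} A P := by
    refine ⟨?_, ?_, ?_⟩
    · intro C hC
      obtain ⟨j, -, rfl⟩ := Finset.mem_image.1 (Finset.mem_coe.1 hC)
      exact hB j
    · intro C hC D hD hCD
      obtain ⟨i, -, rfl⟩ := Finset.mem_image.1 (Finset.mem_coe.1 hC)
      obtain ⟨j, -, rfl⟩ := Finset.mem_image.1 (Finset.mem_coe.1 hD)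
      have hij : i ≠ j := fun h => hCD (h ▸ rfl)
      exact (disjoint_disjointed E hij).mono inter_subset_right inter_subset_right
    · have h1 : ⋃₀ (P : Set (Set S)) = A ∩ ⋃ j ∈ Finset.range (n + 1), disjointed E j := by
        simp [P, B, sUnion_image, inter_iUnion₂]
      have h2 : (⋃ j ∈ Finset.range (n + 1), disjointed E j) = univ := by
        refine (biUnion_range_succ_disjointed E n).trans ?_
        rw [partialSups_eq_biUnion_range]
        refine eq_univ_of_forall fun x => ?_
        obtain ⟨j, hj, hx⟩ := exists_partialSups_eq (fun j => f j x) n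
        refine mem_iUnion₂.2 ⟨j, Finset.mem_range.2 (Nat.lt_succ_of_le hj), ?_⟩
        change f j x = partialSups f n x
        rw [Pi.partialSups_apply, hx]
      rw [h1, h2, inter_univ]
  rw [← sum_eIntegral ν hn hP]
  refine le_trans (Finset.sum_le_sum fun C hC => ?_)
    (le_iSup₂ (f := fun (P : Finset (Set S)) (_ : IsPartition {B : Set S | MeasurableSet B} A P) =>
      ∑ C ∈ P, ⨆ j, eIntegral ν (f j) C) P hP)
  obtain ⟨j, -, rfl⟩ := Finset.mem_image.1 hC
  refine le_trans (eIntegral_mono ν (hB j) fun x hx => ?_)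
    (le_iSup (fun i => eIntegral ν (f i) (B j)) j)
  exact (show f j x = _ from disjointed_subset E j hx.2).ge

/-- Monotone convergence for `EReal`-valued functions whose negative parts are integrable. -/
theorem tendsto_eIntegral {S : Type*} [MeasurableSpace S] (ν : Measure S)
    (g : ℕ → S → EReal) (hg : ∀ n, Measurable (g n)) (hmono : Monotone g) {G : S → EReal}
    (hG : ∀ x, G x = ⨆ n, g n x) (h0 : (∫⁻ x, erealToENNReal (-g 0 x) ∂ν) < ⊤) (A : Set S) :
    Filter.Tendsto (fun n => eIntegral ν (g n) A) Filter.atTop (nhds (eIntegral ν G A)) := by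
  have hlim (x : S) : Filter.Tendsto (fun n => g n x) Filter.atTop (nhds (G x)) := by
    rw [hG x]
    exact tendsto_atTop_iSup fun m n h => hmono h x
  have hpos : Filter.Tendsto (fun n => ∫⁻ x in A, erealToENNReal (g n x) ∂ν) Filter.atTop
      (nhds (∫⁻ x in A, erealToENNReal (G x) ∂ν)) := by
    refine lintegral_tendsto_of_tendsto_of_monotone
      (fun n => (hg n).ereal_toENNReal.aemeasurable) ?_ ?_
    · exact Filter.Eventually.of_forall fun x m n h => EReal.toENNReal_le_toENNReal (hmono h x)
    · exact Filter.Eventually.of_forall fun x =>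
        (EReal.continuous_toENNReal.tendsto _).comp (hlim x)
  have hfin : (∫⁻ x in A, erealToENNReal (-g 0 x) ∂ν) ≠ ⊤ :=
    ((setLIntegral_le_lintegral A _).trans_lt h0).ne
  have hneg : Filter.Tendsto (fun n => ∫⁻ x in A, erealToENNReal (-g n x) ∂ν) Filter.atTop
      (nhds (∫⁻ x in A, erealToENNReal (-G x) ∂ν)) := by
    refine tendsto_lintegral_of_dominated_convergence (fun x => erealToENNReal (-g 0 x))
      (fun n => (hg n).neg.ereal_toENNReal) ?_ hfin ?_
    · exact fun n => Filter.Eventually.of_forall fun x =>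
        EReal.toENNReal_le_toENNReal (EReal.neg_le_neg_iff.2 (hmono (Nat.zero_le n) x))
    · exact Filter.Eventually.of_forall fun x =>
        ((EReal.continuous_toENNReal.comp continuous_neg).tendsto _).comp (hlim x)
  have hGfin : (∫⁻ x in A, erealToENNReal (-G x) ∂ν) ≠ ⊤ := by
    refine ne_top_of_le_ne_top hfin (lintegral_mono fun x => ?_)
    exact EReal.toENNReal_le_toENNReal (EReal.neg_le_neg_iff.2 (hG x ▸ le_iSup (g · x) 0))
  have hpos' := (continuous_coe_ennreal_ereal.tendsto _).comp hpos
  have hneg' := ((continuous_neg.comp continuous_coe_ennreal_ereal).tendsto _).comp hneg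
  have hadd := (EReal.continuousAt_add
    (p := (((∫⁻ x in A, erealToENNReal (G x) ∂ν : ℝ≥0∞) : EReal),
      -((∫⁻ x in A, erealToENNReal (-G x) ∂ν : ℝ≥0∞) : EReal)))
    (.inr (by simpa using hGfin)) (.inl (EReal.coe_ennreal_ne_bot _))).tendsto
  exact hadd.comp (hpos'.prodMk_nhds hneg')

/-- the partition-supremum of the measures `μ_f`, `f ∈ 𝔉`, coincides with the
supremum over the countable subfamily and has density `f̌ = sup_j f_j` with respect to `ν`. -/
theorem statement17 {S : Type*} [MeasurableSpace S] (ν : MeasureTheory.Measure S)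
    [MeasureTheory.SigmaFinite ν]
    (𝔉 : Set (S → EReal)) (hmeas : ∀ f ∈ 𝔉, Measurable f)
    (hbot : ∀ f ∈ 𝔉, ∀ x, f x ≠ ⊥)
    (hint : ∀ f ∈ 𝔉, (∫⁻ x, erealToENNReal (-f x) ∂ν) < ⊤)
    (fseq : ℕ → S → EReal) (hseq : ∀ j, fseq j ∈ 𝔉)
    (fsup : S → EReal) (hfsup : ∀ x, fsup x = ⨆ j, fseq j x)
    (hsup : ∀ x, (⨆ f : 𝔉, (f : S → EReal) x) = fsup x) :
    ∀ A : Set S, MeasurableSet A →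
      supFun {B : Set S | MeasurableSet B} (fun f : 𝔉 => eIntegral ν f) A =
        supFun {B : Set S | MeasurableSet B} (fun j : ℕ => eIntegral ν (fseq j)) A ∧
      supFun {B : Set S | MeasurableSet B} (fun f : 𝔉 => eIntegral ν f) A =
        eIntegral ν fsup A := by
  intro A hA
  have hle (f : S → EReal) (hf : f ∈ 𝔉) (x : S) : f x ≤ fsup x :=
    hsup x ▸ le_iSup (fun f : 𝔉 => (f : S → EReal) x) ⟨f, hf⟩
  -- Anything above `f_0` has negative part dominated by `f_0⁻`.
  have hfin (g : S → EReal) (hg : ∀ x, fseq 0 x ≤ g x) :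
      (∫⁻ x, erealToENNReal (-g x) ∂ν) < ⊤ :=
    (lintegral_mono fun x => EReal.toENNReal_le_toENNReal
      (EReal.neg_le_neg_iff.2 (hg x))).trans_lt (hint _ (hseq 0))
  have hgmeas (n : ℕ) : Measurable (partialSups fseq n) := by
    rw [partialSups_eq_sup'_range]
    exact Finset.measurable_sup' _ fun j _ => hmeas _ (hseq j)
  have hgsup (x : S) : fsup x = ⨆ n, partialSups fseq n x := by
    simp only [hfsup x, Pi.partialSups_apply]
    exact (iSup_partialSups_eq fun j => fseq j x).symm
  have hlower : eIntegral ν fsup A ≤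
      supFun {B : Set S | MeasurableSet B} (fun j : ℕ => eIntegral ν (fseq j)) A :=
    le_of_tendsto'
      (tendsto_eIntegral ν (fun n => partialSups fseq n) hgmeas (partialSups_monotone fseq) hgsup
        (hfin _ fun x => le_partialSups_of_le fseq (Nat.zero_le 0) x) A)
      fun n => eIntegral_partialSups_le_supFun ν fseq (fun j => hmeas _ (hseq j)) n
        (hfin _ fun x => le_partialSups_of_le fseq (Nat.zero_le n) x) (hgmeas n) hA
  have hsub : supFun {B : Set S | MeasurableSet B} (fun j : ℕ => eIntegral ν (fseq j)) A ≤
      supFun {B : Set S | MeasurableSet B} (fun f : 𝔉 => eIntegral ν f) A :=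
    iSup₂_mono fun P _ => Finset.sum_le_sum fun C _ => iSup_le fun j =>
      le_iSup (fun f : 𝔉 => eIntegral ν f C) ⟨fseq j, hseq j⟩
  have hupper : supFun {B : Set S | MeasurableSet B} (fun f : 𝔉 => eIntegral ν f) A ≤
      eIntegral ν fsup A :=
    supFun_le_eIntegral ν (fun f : 𝔉 => (f : S → EReal)) (hfin _ (hle _ (hseq 0)))
      (fun f => hle f f.2) A
  exact ⟨(hupper.trans hlower).antisymm hsub, hupper.antisymm (hlower.trans hsub)⟩

end SignedCharges
end
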